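/- arXiv:2207.13155 — 5 statements merged into one kernel-verified Lean document; each statement's English description precedes it below -/
import Mathlib

section
/- Let m, n, k be positive integers, let 0 < c ≤ 1, and for t ≥ 0 let g_t ∈ GL_{m+n}(ℝ) be the diagonal matrix diag(e^{nt},…,e^{nt},e^{−mt},…,e^{−mt}) (with e^{nt} repeated m times and e^{−mt} repeated n times), and for Y ∈ M_{m,n}(ℝ) let h_Y ∈ GL_{m+n}(ℝ) be the block matrix [[I_m, Y],[0, I_n]]. Then a k-tuple (Y_1,…,Y_k) of real m×n matrices is c-Dirichlet improvable if and only if there exists t_0 > 0 such that for every t ≥ t_0 there exist a nonzero integer vector v ∈ ℤ^{m+n} and an index i ∈ {1,…,k} with ‖g_t h_{Y_i} v‖ < c^{m/(m+n)}, where ‖·‖ is the supremum norm on ℝ^{m+n}. -/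
/-! The dictionary is `v = (-p, q)` and `N = r e^{mt}`, where `r = c^{m/(m+n)}`. The vector
`g_t h_Y v` has the blocks `e^{nt} (Y q - p)` and `e^{-mt} q`, so its norm is less than `r` exactly
when `‖Y q - p‖ < r e^{-nt}` and `‖q‖ < r e^{mt} = N` (`norm_flow_lt_iff`). The exponents are chosen
so that `r e^{-nt} = c N^{-n/m}` (`scale_identity`). One side requires `q` to be nonzero, the other
only `v`. These conditions agree for `t ≥ 0`: if `q = 0`, then
`‖p‖ < r e^{-nt} ≤ 1`, which forces the integer vector `p` to vanish. This is where `c ≤ 1`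
enters. -/

open scoped BigOperators

/-- The set of `c`-Dirichlet improvable `k`-tuples of real `m × n` matrices. -/
def DIset (m n k : ℕ) (c : ℝ) : Set (Fin k → Fin m → Fin n → ℝ) :=
  {Y | ∃ N₀ : ℝ, 0 < N₀ ∧ ∀ N : ℝ, N₀ ≤ N →
    ∃ (p : Fin m → ℤ) (q : Fin n → ℤ) (i : Fin k),
      ‖(fun a : Fin m => (∑ b : Fin n, Y i a b * (q b : ℝ)) - (p a : ℝ))‖
          < c * N ^ (-(n : ℝ) / (m : ℝ)) ∧
      0 < ‖(fun b : Fin n => (q b : ℝ))‖ ∧ ‖(fun b : Fin n => (q b : ℝ))‖ < N}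

/-- The diagonal one-parameter semigroup `g_t = diag(e^{nt},…,e^{nt},e^{-mt},…,e^{-mt})`
(`e^{nt}` repeated `m` times, `e^{-mt}` repeated `n` times). -/
noncomputable def gt (m n : ℕ) (t : ℝ) : Matrix (Fin (m + n)) (Fin (m + n)) ℝ :=
  Matrix.diagonal fun i => if (i : ℕ) < m then Real.exp (n * t) else Real.exp (-(m * t))

/-- The block-unipotent matrix `h_Y = [[I_m, Y], [0, I_n]]` associated to an
`m × n` matrix `Y`. -/
noncomputable def hY (m n : ℕ) (Y : Fin m → Fin n → ℝ) : Matrix (Fin (m + n)) (Fin (m + n)) ℝ :=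
  Matrix.of fun i j =>
    (if (i : ℕ) = (j : ℕ) then 1 else 0) +
      (if hi : (i : ℕ) < m then
        (if hj : m ≤ (j : ℕ) then Y ⟨(i : ℕ), hi⟩ ⟨(j : ℕ) - m, by omega⟩ else 0)
      else 0)

lemma hY_mulVec_castAdd (m n : ℕ) (Y : Fin m → Fin n → ℝ) (v : Fin (m + n) → ℝ) (a : Fin m) :
    (hY m n Y).mulVec v (Fin.castAdd n a) =
      v (Fin.castAdd n a) + ∑ b : Fin n, Y a b * v (Fin.natAdd m b) := by
  have h1 : ∀ b : Fin m, hY m n Y (Fin.castAdd n a) (Fin.castAdd n b) = if a = b then 1 else 0 := by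
    intro b
    simp [hY, Fin.ext_iff]
  have h2 : ∀ b : Fin n, hY m n Y (Fin.castAdd n a) (Fin.natAdd m b) = Y a b := by
    intro b
    have : (a : ℕ) ≠ m + b := by have := a.2; omega
    simp [hY, this]
  simp [Matrix.mulVec, dotProduct, Fin.sum_univ_add, h1, h2]

lemma hY_mulVec_natAdd (m n : ℕ) (Y : Fin m → Fin n → ℝ) (v : Fin (m + n) → ℝ) (b : Fin n) :
    (hY m n Y).mulVec v (Fin.natAdd m b) = v (Fin.natAdd m b) := by
  have h1 : ∀ a : Fin m, hY m n Y (Fin.natAdd m b) (Fin.castAdd n a) = 0 := by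
    intro a
    have : m + (b : ℕ) ≠ a := by have := a.2; omega
    simp [hY, this]
  have h2 : ∀ d : Fin n, hY m n Y (Fin.natAdd m b) (Fin.natAdd m d) = if b = d then 1 else 0 := by
    intro d
    simp [hY, Fin.ext_iff]
  simp [Matrix.mulVec, dotProduct, Fin.sum_univ_add, h1, h2]

/-- The norm condition on `g_t h_Y v` splits into one condition on each block. -/
lemma norm_flow_lt_iff (m n : ℕ) (Y : Fin m → Fin n → ℝ) (v : Fin (m + n) → ℝ) (t r : ℝ)
    (hr : 0 < r) :
    ‖(gt m n t).mulVec ((hY m n Y).mulVec v)‖ < r ↔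
      ‖(fun a : Fin m => (∑ b : Fin n, Y a b * v (Fin.natAdd m b)) + v (Fin.castAdd n a))‖
          < r * Real.exp (-(n * t)) ∧
      ‖(fun b : Fin n => v (Fin.natAdd m b))‖ < r * Real.exp (m * t) := by
  have e1 : 0 < r * Real.exp (-(n * t)) := by positivity
  have e2 : 0 < r * Real.exp (m * t) := by positivity
  rw [pi_norm_lt_iff hr, pi_norm_lt_iff e1, pi_norm_lt_iff e2, Fin.forall_fin_add]
  refine and_congr (forall_congr' fun a => ?_) (forall_congr' fun b => ?_)
  · rw [gt, Matrix.mulVec_diagonal, hY_mulVec_castAdd, norm_mul, add_comm (v _)]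
    simp only [Fin.val_castAdd, Fin.is_lt, if_true]
    rw [Real.norm_of_nonneg (Real.exp_pos _).le, Real.exp_neg, ← div_eq_mul_inv,
      lt_div_iff₀ (Real.exp_pos _), mul_comm]
  · rw [gt, Matrix.mulVec_diagonal, hY_mulVec_natAdd, norm_mul]
    have : ¬ (m + (b : ℕ) < m) := by omega
    simp only [Fin.val_natAdd, this, if_false]
    rw [Real.norm_of_nonneg (Real.exp_pos _).le, Real.exp_neg, inv_mul_eq_div,
      div_lt_iff₀ (Real.exp_pos _)]

/-- With `N = r e^{mt}` and `r = c^{m/(m+n)}`, one has `c N^{-n/m} = r e^{-nt}`. -/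
lemma scale_identity (m n : ℕ) (hm : 0 < m) (c : ℝ) (hc0 : 0 < c) (t : ℝ) :
    c * (c ^ ((m : ℝ) / ((m : ℝ) + (n : ℝ))) * Real.exp (m * t)) ^ (-(n : ℝ) / (m : ℝ)) =
      c ^ ((m : ℝ) / ((m : ℝ) + (n : ℝ))) * Real.exp (-(n * t)) := by
  have hm' : (0 : ℝ) < m := by exact_mod_cast hm
  have hmn : (0 : ℝ) < (m : ℝ) + n := by positivity
  rw [Real.mul_rpow (by positivity) (by positivity), ← Real.rpow_mul hc0.le, ← Real.exp_mul,
    ← mul_assoc]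
  congr 1
  · nth_rewrite 1 [← Real.rpow_one c]
    rw [← Real.rpow_add hc0]
    congr 1
    field_simp
    ring
  · congr 1
    field_simp

/-- An integer vector of norm less than `1` is zero. -/
lemma int_vec_eq_zero {ι : Type*} [Fintype ι] (p : ι → ℤ)
    (h : ‖(fun a => (p a : ℝ))‖ < 1) : p = 0 := by
  funext a
  have h1 := (norm_le_pi_norm (fun a => (p a : ℝ)) a).trans_lt h
  rw [Real.norm_eq_abs] at h1
  exact Int.abs_lt_one_iff.mp (by exact_mod_cast h1)

/-- Dynamical interpretation of Dirichlet improvability: a `k`-tuple `(Y_1,…,Y_k)` is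
`c`-Dirichlet improvable if and only if for all sufficiently large `t` some lattice point
`g_t h_{Y_i} v`, with `v ∈ ℤ^{m+n} \ {0}` and `1 ≤ i ≤ k`, has supremum norm less than
`c^{m/(m+n)}`. -/
theorem DIset_iff_dynamics (m n k : ℕ) (hm : 0 < m) (hn : 0 < n) (hk : 0 < k)
    (c : ℝ) (hc0 : 0 < c) (hc1 : c ≤ 1) (Y : Fin k → Fin m → Fin n → ℝ) :
    Y ∈ DIset m n k c ↔
      ∃ t₀ : ℝ, 0 < t₀ ∧ ∀ t : ℝ, t₀ ≤ t →
        ∃ (v : Fin (m + n) → ℤ) (i : Fin k), v ≠ 0 ∧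
          ‖(gt m n t).mulVec ((hY m n (Y i)).mulVec fun j => (v j : ℝ))‖
            < c ^ ((m : ℝ) / ((m : ℝ) + (n : ℝ))) := by
  have hm' : (0 : ℝ) < m := by exact_mod_cast hm
  have hr0 : 0 < c ^ ((m : ℝ) / ((m : ℝ) + (n : ℝ))) := by positivity
  have hr1 : c ^ ((m : ℝ) / ((m : ℝ) + (n : ℝ))) ≤ 1 :=
    Real.rpow_le_one hc0.le hc1 (by positivity)
  have scale := scale_identity m n hm c hc0
  set r := c ^ ((m : ℝ) / ((m : ℝ) + (n : ℝ)))
  constructor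
  · rintro ⟨N₀, hN₀, H⟩
    refine ⟨max 1 (Real.log (N₀ / r) / m), by positivity, fun t ht => ?_⟩
    have hN : N₀ ≤ r * Real.exp (m * t) := by
      have h1 := (le_max_right _ _).trans ht
      rw [div_le_iff₀ hm', Real.log_le_iff_le_exp (by positivity), div_le_iff₀ hr0] at h1
      rwa [mul_comm r, mul_comm (m : ℝ)]
    obtain ⟨p, q, i, h1, h2, h3⟩ := H _ hN
    refine ⟨Fin.append (-p) q, i, ?_, ?_⟩
    · intro h0
      have hq : q = 0 := by
        funext b
        simpa using congrFun h0 (Fin.natAdd m b)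
      subst hq
      refine h2.ne' (norm_eq_zero.mpr ?_)
      funext b
      simp
    · rw [norm_flow_lt_iff _ _ _ _ _ _ hr0]
      rw [scale] at h1
      simpa [sub_eq_add_neg] using And.intro h1 h3
  · rintro ⟨t₀, ht₀, H⟩
    refine ⟨r * Real.exp (m * t₀), by positivity, fun N hN => ?_⟩
    have hN0 : 0 < N := lt_of_lt_of_le (by positivity) hN
    obtain ⟨t, rfl⟩ : ∃ t, N = r * Real.exp (m * t) := by
      refine ⟨Real.log (N / r) / m, ?_⟩
      rw [mul_div_cancel₀ _ hm'.ne', Real.exp_log (by positivity), mul_div_cancel₀ _ hr0.ne']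
    have ht : t₀ ≤ t := by
      have := Real.exp_le_exp.mp (le_of_mul_le_mul_left hN hr0)
      exact le_of_mul_le_mul_left this hm'
    obtain ⟨v, i, hv, h⟩ := H t ht
    rw [norm_flow_lt_iff _ _ _ _ _ _ hr0] at h
    refine ⟨fun a => -v (Fin.castAdd n a), fun b => v (Fin.natAdd m b), i, ?_, ?_, h.2⟩
    · rw [scale]
      simpa [sub_eq_add_neg] using h.1
    · refine norm_pos_iff.mpr fun hq => hv ?_
      have hq' : ∀ b, (v (Fin.natAdd m b) : ℝ) = 0 := fun b => congrFun hq b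
      have hlt : r * Real.exp (-(n * t)) ≤ 1 := by
        refine mul_le_one₀ hr1 (Real.exp_pos _).le (Real.exp_le_one_iff.mpr ?_)
        have : 0 ≤ (n : ℝ) * t := mul_nonneg n.cast_nonneg (ht₀.le.trans ht)
        linarith
      have hp := int_vec_eq_zero (fun a => v (Fin.castAdd n a))
        (by simpa [hq'] using h.1.trans_le hlt)
      funext j
      refine Fin.addCases (fun a => congrFun hp a) (fun b => ?_) j
      exact_mod_cast hq' b
end

section
/- For every positive integer N and all positive real numbers n₁, n₂, n₃ one has ∑_{J ⊆ {1,…,N}} n₁^{N−|J|−d_{J,N}} · n₂^{|J|−d_{J,N}} · n₃^{2·d_{J,N}} ≤ (n₁ + n₂ + n₃)^N, where the sum runs over all subsets J of {1,…,N}. -/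
open scoped BigOperators

/-!
Write `S N` for the sum over `J ⊆ {1,…,N}`. Sort the subsets of `{1,…,N+2}` by their top two
elements; such a subset

* contains `N+2`, and then its weight is `n₂` times that of its trace on `{1,…,N+1}`; or
* contains `N+1` but not `N+2`, so that it has an exit at `N+1`, and then its weight is `n₃²` times
  that of its trace on `{1,…,N}`; or
* contains neither, and then its weight is `n₁` times that of the same set in `{1,…,N+1}`.

Since all weights are nonnegative, this gives `S (N+2) ≤ (n₁ + n₂) S (N+1) + n₃² S N`
(`subsetSum_add_two_le`). With `s = n₁ + n₂ + n₃` the bound `S N ≤ s ^ N` follows by two-step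
induction, because `n₃² s ^ N ≤ n₃ s ^ (N+1)`.
-/

/-- For `J ⊆ {1,…,N}`, the number of indices `1 ≤ i ≤ N-1` with `i ∈ J` and `i+1 ∉ J`. -/
def exitCount (N : ℕ) (J : Finset ℕ) : ℕ :=
  ((Finset.Ico 1 N).filter fun i => i ∈ J ∧ i + 1 ∉ J).card

/-- The summand attached to `J`, with `a, b, c` in the roles of `n₁, n₂, n₃`. -/
noncomputable def subsetWeight (a b c : ℝ) (N : ℕ) (J : Finset ℕ) : ℝ :=
  a ^ (N - J.card - exitCount N J) * b ^ (J.card - exitCount N J) * c ^ (2 * exitCount N J)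

/-- The sum of the weights of all subsets of `{1,…,N}`. -/
noncomputable def subsetSum (a b c : ℝ) (N : ℕ) : ℝ :=
  ∑ J ∈ (Finset.Icc 1 N).powerset, subsetWeight a b c N J

lemma exitCount_le_card (N : ℕ) (J : Finset ℕ) : exitCount N J ≤ J.card := by
  apply Finset.card_le_card
  intro i hi
  exact (Finset.mem_filter.1 hi).2.1

/-- The successors of the exits are distinct elements of `{1,…,N}` outside `J`. -/
lemma exitCount_add_card_le {N : ℕ} {J : Finset ℕ} (hJ : J ⊆ Finset.Icc 1 N) :
    exitCount N J + J.card ≤ N := by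
  have h : exitCount N J ≤ (Finset.Icc 1 N \ J).card := by
    apply Finset.card_le_card_of_injOn (fun i => i + 1)
    · intro i hi
      simp only [Finset.coe_filter, Finset.mem_Ico, Set.mem_ofPred_eq] at hi
      simp only [Finset.coe_sdiff, Set.mem_sdiff, Finset.mem_coe, Finset.mem_Icc]
      exact ⟨by omega, hi.2.2⟩
    · intro i _ j _ hij
      simpa using hij
  rw [Finset.card_sdiff_of_subset hJ, Nat.card_Icc] at h
  have := Finset.card_le_card hJ
  rw [Nat.card_Icc] at this
  omega

lemma exitCount_succ {N : ℕ} {J : Finset ℕ} (h0 : 0 ∉ J) :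
    exitCount (N + 1) J = exitCount N J + if N ∈ J ∧ N + 1 ∉ J then 1 else 0 := by
  rcases Nat.eq_zero_or_pos N with rfl | hN
  · simp [exitCount, h0]
  · unfold exitCount
    rw [← Finset.insert_Ico_right_eq_Ico_add_one hN, Finset.filter_insert]
    split_ifs
    · rw [Finset.card_insert_of_notMem (by simp)]
    · rfl

/-- Elements beyond `N` do not affect the exits before `N`. -/
lemma exitCount_insert (N : ℕ) (J : Finset ℕ) :
    exitCount N (insert (N + 1) J) = exitCount N J := by
  unfold exitCount
  congr 1
  apply Finset.filter_congr
  intro i hi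
  have hi := Finset.mem_Ico.1 hi
  simp [show i ≠ N + 1 by omega, show i ≠ N by omega]

lemma subsetWeight_insert (a b c : ℝ) {N : ℕ} {J : Finset ℕ} (hJ : J ⊆ Finset.Icc 1 N) :
    subsetWeight a b c (N + 1) (insert (N + 1) J) = b * subsetWeight a b c N J := by
  have hn : N + 1 ∉ J := fun h => by have := Finset.mem_Icc.1 (hJ h); omega
  have h0 : 0 ∉ J := fun h => by have := Finset.mem_Icc.1 (hJ h); omega
  have hd : exitCount (N + 1) (insert (N + 1) J) = exitCount N J := by
    rw [exitCount_succ (by simp [h0]), exitCount_insert]; simp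
  have h1 := exitCount_le_card N J
  unfold subsetWeight
  rw [hd, Finset.card_insert_of_notMem hn, Nat.add_sub_add_right,
    show J.card + 1 - exitCount N J = (J.card - exitCount N J) + 1 by omega, pow_succ]
  ring

lemma subsetWeight_exit (a b c : ℝ) {N : ℕ} {J : Finset ℕ} (hJ : J ⊆ Finset.Icc 1 N) :
    subsetWeight a b c (N + 2) (insert (N + 1) J) = c ^ 2 * subsetWeight a b c N J := by
  have hn : N + 1 ∉ J := fun h => by have := Finset.mem_Icc.1 (hJ h); omega
  have hn2 : N + 2 ∉ J := fun h => by have := Finset.mem_Icc.1 (hJ h); omega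
  have h0 : 0 ∉ J := fun h => by have := Finset.mem_Icc.1 (hJ h); omega
  have hd : exitCount (N + 2) (insert (N + 1) J) = exitCount N J + 1 := by
    rw [exitCount_succ (by simp [h0]), exitCount_succ (by simp [h0]), exitCount_insert]
    simp [hn2]
  unfold subsetWeight
  rw [hd, Finset.card_insert_of_notMem hn,
    show N + 2 - (J.card + 1) - (exitCount N J + 1) = N - J.card - exitCount N J by omega,
    Nat.add_sub_add_right, mul_add, pow_add]
  ring

lemma subsetWeight_stay (a b c : ℝ) {N : ℕ} {J : Finset ℕ} (hJ : J ⊆ Finset.Icc 1 N) :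
    subsetWeight a b c (N + 2) J = a * subsetWeight a b c (N + 1) J := by
  have hn : N + 1 ∉ J := fun h => by have := Finset.mem_Icc.1 (hJ h); omega
  have h0 : 0 ∉ J := fun h => by have := Finset.mem_Icc.1 (hJ h); omega
  have hd : exitCount (N + 2) J = exitCount (N + 1) J := by
    rw [exitCount_succ h0]; simp [hn]
  have h1 : exitCount (N + 1) J + J.card ≤ N + 1 := exitCount_add_card_le
    (hJ.trans (Finset.Icc_subset_Icc_right (Nat.le_succ N)))
  unfold subsetWeight
  rw [hd, show N + 2 - J.card - exitCount (N + 1) J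
    = (N + 1 - J.card - exitCount (N + 1) J) + 1 by omega, pow_succ]
  ring

/-- Splitting off the top element of `{1,…,N+1}`. -/
lemma sum_powerset_Icc_succ (N : ℕ) (f : Finset ℕ → ℝ) :
    ∑ J ∈ (Finset.Icc 1 (N + 1)).powerset, f J
      = ∑ J ∈ (Finset.Icc 1 N).powerset, f J
        + ∑ J ∈ (Finset.Icc 1 N).powerset, f (insert (N + 1) J) := by
  rw [← Finset.insert_Icc_right_eq_Icc_add_one (by omega : 1 ≤ N + 1)]
  exact Finset.sum_powerset_insert (by simp) f

lemma subsetSum_add_two_le {a b c : ℝ} (ha : 0 ≤ a) (hb : 0 ≤ b) (hc : 0 ≤ c) (N : ℕ) :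
    subsetSum a b c (N + 2) ≤ (a + b) * subsetSum a b c (N + 1) + c ^ 2 * subsetSum a b c N := by
  have hpos : ∀ M J, 0 ≤ subsetWeight a b c M J := fun M J => by
    unfold subsetWeight; positivity
  have hb' : ∑ J ∈ (Finset.Icc 1 (N + 1)).powerset,
      subsetWeight a b c (N + 2) (insert (N + 2) J) = b * subsetSum a b c (N + 1) := by
    rw [subsetSum, Finset.mul_sum]
    exact Finset.sum_congr rfl fun J hJ => subsetWeight_insert a b c (Finset.mem_powerset.1 hJ)
  have hc' : ∑ J ∈ (Finset.Icc 1 N).powerset,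
      subsetWeight a b c (N + 2) (insert (N + 1) J) = c ^ 2 * subsetSum a b c N := by
    rw [subsetSum, Finset.mul_sum]
    exact Finset.sum_congr rfl fun J hJ => subsetWeight_exit a b c (Finset.mem_powerset.1 hJ)
  have ha' : ∑ J ∈ (Finset.Icc 1 N).powerset, subsetWeight a b c (N + 2) J
      ≤ a * subsetSum a b c (N + 1) := by
    rw [Finset.sum_congr rfl fun J hJ => subsetWeight_stay a b c (Finset.mem_powerset.1 hJ),
      ← Finset.mul_sum]
    refine mul_le_mul_of_nonneg_left ?_ ha
    exact Finset.sum_le_sum_of_subset_of_nonneg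
      (Finset.powerset_mono.2 (Finset.Icc_subset_Icc_right (Nat.le_succ N)))
      fun J _ _ => hpos _ J
  have h : subsetSum a b c (N + 2) = _ := sum_powerset_Icc_succ (N + 1) _
  rw [sum_powerset_Icc_succ N] at h
  linarith

lemma subsetSum_le {a b c : ℝ} (ha : 0 ≤ a) (hb : 0 ≤ b) (hc : 0 ≤ c) :
    ∀ N, subsetSum a b c N ≤ (a + b + c) ^ N
  | 0 => by simp [subsetSum, subsetWeight, exitCount]
  | 1 => by
    have h : subsetSum a b c 1 = a + b := by
      rw [subsetSum, sum_powerset_Icc_succ 0]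
      simp [subsetWeight, exitCount]
    rw [h, pow_one]
    linarith
  | N + 2 => by
    have h := subsetSum_add_two_le ha hb hc N
    have h0 := mul_le_mul_of_nonneg_left (subsetSum_le ha hb hc N) (sq_nonneg c)
    have h1 := mul_le_mul_of_nonneg_left (subsetSum_le ha hb hc (N + 1)) (add_nonneg ha hb)
    have h2 : 0 ≤ c * (a + b) * (a + b + c) ^ N := by positivity
    calc subsetSum a b c (N + 2)
        ≤ (a + b) * (a + b + c) ^ (N + 1) + c ^ 2 * (a + b + c) ^ N
            + c * (a + b) * (a + b + c) ^ N := by linarith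
      _ = (a + b + c) ^ (N + 2) := by ring

/-- Combinatorial lemma: for all positive reals `n₁, n₂, n₃`,
`∑_{J ⊆ {1,…,N}} n₁^{N-|J|-d_{J,N}} n₂^{|J|-d_{J,N}} n₃^{2 d_{J,N}} ≤ (n₁+n₂+n₃)^N`. -/
theorem sum_over_subsets_le (N : ℕ) (hN : 0 < N) (n₁ n₂ n₃ : ℝ)
    (h1 : 0 < n₁) (h2 : 0 < n₂) (h3 : 0 < n₃) :
    ∑ J ∈ (Finset.Icc 1 N).powerset,
      n₁ ^ (N - J.card - exitCount N J) * n₂ ^ (J.card - exitCount N J) *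
        n₃ ^ (2 * exitCount N J)
      ≤ (n₁ + n₂ + n₃) ^ N :=
  subsetSum_le h1.le h2.le h3.le N
end

section
/- For every positive integer n and every nonnegative integer ℓ there exists a constant M ≥ 1 with the following property: for every open set O ⊆ ℝ^n and every ε with 0 < ε < 1 there exists a C^∞ function ψ : ℝ^n → ℝ such that (1) 0 ≤ ψ(x) ≤ 1 for all x; (2) ψ(x) = 1 for every x ∈ σ_ε O; (3) ψ(x) = 0 for every x ∉ O; and (4) for every integer j with 0 ≤ j ≤ ℓ and every x ∈ ℝ^n, ‖D^j ψ(x)‖ ≤ M · ε^{−ℓ}, where D^j ψ(x) denotes the j-th iterated (Fréchet) derivative of ψ at x and ‖·‖ its operator norm. -/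
/-!
The function `ψ` is a mollified indicator: with `B = {y | ε / 2 < dist(ε y, Oᶜ)}` and `φ` a fixed
normalized bump supported in the ball of radius `1 / 2`, put `ψ x = (φ ⋆ 1_B) (ε⁻¹ x)`. If `x` is in
the `ε`-core, the ball of radius `1 / 2` about `ε⁻¹ x` lies in `B`; if `x ∉ O`, it misses `B`.
Derivatives of the
convolution fall on `φ`, so that `‖D^j (φ ⋆ g)‖ ≤ ∫ ‖D^j φ‖` whenever `|g| ≤ 1`; this constant does
not depend on `g`, hence neither on `O` nor on `ε` (`exists_iteratedFDeriv_convolution_bound`).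
The dilation contributes a factor `ε⁻ʲ ≤ ε⁻ˡ`.
-/

open MeasureTheory
open scoped Convolution

lemma norm_convolution_le_integral {E F : Type} [NormedAddCommGroup E] [MeasurableSpace E]
    [OpensMeasurableSpace E] {μ : Measure E} [IsFiniteMeasureOnCompacts μ]
    [NormedAddCommGroup F] [NormedSpace ℝ F]
    {f : E → F} (hf : Continuous f) (hfc : HasCompactSupport f)
    {g : E → ℝ} (hg : ∀ x, |g x| ≤ 1) (x : E) :
    ‖(f ⋆[(ContinuousLinearMap.lsmul ℝ ℝ).flip, μ] g) x‖ ≤ ∫ t, ‖f t‖ ∂μ := by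
  refine norm_integral_le_of_norm_le (hf.integrable_of_hasCompactSupport hfc).norm ?_
  refine Filter.Eventually.of_forall fun t => ?_
  simp only [ContinuousLinearMap.flip_apply, ContinuousLinearMap.lsmul_apply, norm_smul,
    Real.norm_eq_abs]
  exact mul_le_of_le_one_left (norm_nonneg _) (hg _)

/-- The `j`-th derivative of `f ⋆ g` is bounded uniformly over all `g` with `|g| ≤ 1`. The induction
on `j` replaces `f` by `fderiv ℝ f`, which is why `f` is vector-valued. -/
lemma exists_iteratedFDeriv_convolution_bound {E : Type} [NormedAddCommGroup E]
    [NormedSpace ℝ E] [FiniteDimensional ℝ E] [MeasurableSpace E] [BorelSpace E]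
    {μ : Measure E} [μ.IsAddHaarMeasure] (j : ℕ) :
    ∀ {F : Type} [NormedAddCommGroup F] [NormedSpace ℝ F] [FiniteDimensional ℝ F]
      {f : E → F}, ContDiff ℝ (⊤ : ℕ∞) f → HasCompactSupport f →
      ∃ C : ℝ, ∀ g : E → ℝ, LocallyIntegrable g μ → (∀ x, |g x| ≤ 1) → ∀ x,
        ‖iteratedFDeriv ℝ j (f ⋆[(ContinuousLinearMap.lsmul ℝ ℝ).flip, μ] g) x‖ ≤ C := by
  induction j with
  | zero =>
    intro F _ _ _ f hf hfc
    refine ⟨∫ t, ‖f t‖ ∂μ, fun g _ hg x => ?_⟩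
    rw [norm_iteratedFDeriv_zero]
    exact norm_convolution_le_integral hf.continuous hfc hg x
  | succ j ih =>
    intro F _ _ _ f hf hfc
    obtain ⟨C, hC⟩ := ih (hf.fderiv_right (m := (⊤ : ℕ∞)) (by simp)) (hfc.fderiv ℝ)
    refine ⟨C, fun g hgi hg x => ?_⟩
    have key : fderiv ℝ (f ⋆[(ContinuousLinearMap.lsmul ℝ ℝ).flip, μ] g)
        = (fderiv ℝ f) ⋆[(ContinuousLinearMap.lsmul ℝ ℝ).flip, μ] g := by
      funext y
      rw [(hfc.hasFDerivAt_convolution_left (ContinuousLinearMap.lsmul ℝ ℝ).flip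
        (hf.of_le (by exact_mod_cast le_top)) hgi y).fderiv]
      rfl
    rw [← norm_iteratedFDeriv_fderiv, key]
    exact hC g hgi hg x

/-- Smooth inner approximation of indicator functions of open sets in `ℝ^n`: for each
`n ≥ 1` and `ℓ ≥ 0` there is `M ≥ 1` such that for every open `O ⊆ ℝ^n` and every
`0 < ε < 1` there is a `C^∞` function `ψ` with `1_{σ_ε O} ≤ ψ ≤ 1_O`, all of whose
iterated derivatives of order `j ≤ ℓ` are bounded by `M ε^{-ℓ}` in operator norm. Here
`σ_ε O = {x : dist(x, O^c) > ε}` is the inner `ε`-core of `O`. -/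
theorem exists_smooth_inner_approx (n : ℕ) (hn : 0 < n) (ℓ : ℕ) :
    ∃ M : ℝ, 1 ≤ M ∧
      ∀ O : Set (EuclideanSpace ℝ (Fin n)), IsOpen O →
        ∀ ε : ℝ, 0 < ε → ε < 1 →
          ∃ ψ : EuclideanSpace ℝ (Fin n) → ℝ,
            ContDiff ℝ (⊤ : ℕ∞) ψ ∧
            (∀ x, 0 ≤ ψ x ∧ ψ x ≤ 1) ∧
            (∀ x, ε < Metric.infDist x Oᶜ → ψ x = 1) ∧
            (∀ x, x ∉ O → ψ x = 0) ∧
            ∀ j : ℕ, j ≤ ℓ → ∀ x,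
              ‖iteratedFDeriv ℝ j ψ x‖ ≤ M * ε ^ (-(ℓ : ℤ)) := by
  let E := EuclideanSpace ℝ (Fin n)
  let φ : ContDiffBump (0 : E) := ⟨1 / 4, 1 / 2, by norm_num, by norm_num⟩
  let f : E → ℝ := φ.normed volume
  have hf : ContDiff ℝ (⊤ : ℕ∞) f := φ.contDiff_normed
  have hfc : HasCompactSupport f := φ.hasCompactSupport_normed
  have hL : (ContinuousLinearMap.lsmul ℝ ℝ : ℝ →L[ℝ] ℝ →L[ℝ] ℝ).flip
      = ContinuousLinearMap.lsmul ℝ ℝ := by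
    ext; simp
  choose C hC using fun j => exists_iteratedFDeriv_convolution_bound (μ := volume) j hf hfc
  have hM (j : ℕ) (hj : j ≤ ℓ) : C j ≤ 1 + ∑ i ∈ Finset.range (ℓ + 1), |C i| := by
    have := Finset.single_le_sum (f := fun i => |C i|) (fun i _ => abs_nonneg (C i))
      (Finset.mem_range.2 (Nat.lt_succ_of_le hj))
    have h2 := le_abs_self (C j)
    linarith
  have hM1 : 1 ≤ 1 + ∑ i ∈ Finset.range (ℓ + 1), |C i| :=
    le_add_of_nonneg_right (Finset.sum_nonneg fun i _ => abs_nonneg _)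
  refine ⟨_, hM1, fun O _ ε hε hε1 => ?_⟩
  let B : Set E := {y | ε / 2 < Metric.infDist (ε • y) Oᶜ}
  have hB : IsOpen B := isOpen_lt continuous_const
    ((Metric.continuous_infDist_pt _).comp (continuous_const_smul ε))
  let g : E → ℝ := B.indicator 1
  have hg0 (y : E) : 0 ≤ g y := Set.indicator_nonneg (fun _ _ => zero_le_one) y
  have hg1 (y : E) : |g y| ≤ 1 := by
    rw [abs_of_nonneg (hg0 y)]
    exact Set.indicator_le_self' (fun _ _ => zero_le_one) y
  have hgi : LocallyIntegrable g volume :=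
    (locallyIntegrable_const (1 : ℝ)).indicator hB.measurableSet
  let u : E → ℝ := f ⋆[(ContinuousLinearMap.lsmul ℝ ℝ).flip, volume] g
  have hu : ContDiff ℝ (⊤ : ℕ∞) u := hfc.contDiff_convolution_left _ hf hgi
  -- At unit scale the bump only sees a ball of radius `1 / 2`, on which `dist(ε y, Oᶜ)` varies by
  -- less than `ε / 2`.
  have hloc (x y : E) (hy : y ∈ Metric.ball (ε⁻¹ • x) φ.rOut) :
      |Metric.infDist (ε • y) Oᶜ - Metric.infDist x Oᶜ| < ε / 2 := by
    have h1 := (Metric.lipschitz_infDist_pt Oᶜ).dist_le_mul (ε • y) x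
    have h2 : dist (ε • y) x = ε * dist y (ε⁻¹ • x) := by
      conv_lhs => rw [← smul_inv_smul₀ hε.ne' x]
      rw [dist_smul₀, Real.norm_of_nonneg hε.le]
    have h3 : dist y (ε⁻¹ • x) < 1 / 2 := hy
    rw [Real.dist_eq, h2, NNReal.coe_one, one_mul] at h1
    nlinarith
  have hself (x : E) : ε⁻¹ • x ∈ Metric.ball (ε⁻¹ • x) φ.rOut :=
    Metric.mem_ball_self φ.rOut_pos
  have huc (x : E) (c : ℝ) (h : ∀ y ∈ Metric.ball (ε⁻¹ • x) φ.rOut, g y = c) :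
      u (ε⁻¹ • x) = c := by
    have := φ.normed_convolution_eq_right (μ := volume) (g := g) (x₀ := ε⁻¹ • x)
      fun y hy => (h y hy).trans (h _ (hself x)).symm
    rw [h _ (hself x), ← hL] at this
    exact this
  refine ⟨fun x => u (ε⁻¹ • x), hu.comp (contDiff_const_smul _), fun x => ⟨?_, ?_⟩,
    fun x hx => huc x 1 fun y hy => ?_, fun x hx => huc x 0 fun y hy => ?_, fun j hj x => ?_⟩
  · refine integral_nonneg fun t => ?_
    exact mul_nonneg (hg0 _) (φ.nonneg_normed t)
  · refine (le_abs_self _).trans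
      ((norm_convolution_le_integral hf.continuous hfc hg1 _).trans_eq ?_)
    have hnorm (t : E) : ‖f t‖ = f t := Real.norm_of_nonneg (φ.nonneg_normed t)
    simp_rw [hnorm]
    exact φ.integral_normed
  · refine Set.indicator_of_mem (s := B) ?_ 1
    have := abs_lt.1 (hloc x y hy)
    change ε / 2 < _
    linarith [this.1]
  · refine Set.indicator_of_notMem (s := B) ?_ 1
    have := abs_lt.1 (hloc x y hy)
    rw [Metric.infDist_zero_of_mem (Set.mem_compl hx)] at this
    change ¬ ε / 2 < _
    linarith [this.2]
  · rw [iteratedFDeriv_comp_const_smul _ (hu.of_le (by exact_mod_cast le_top)), norm_smul,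
      mul_comm, norm_pow, Real.norm_of_nonneg (inv_nonneg.2 hε.le), zpow_neg, zpow_natCast,
      ← inv_pow]
    exact mul_le_mul ((hC j g hgi hg1 _).trans (hM j hj))
      (pow_le_pow_right₀ ((one_le_inv₀ hε).2 hε1.le) hj) (by positivity) (by linarith)
end

section
/- Let (Ω, ν) be a probability measure space, X a measurable space, Φ : Ω × X → X a measurable map, u : X → [0,∞) a measurable function, and let 0 < c < 1 and d > 0. Suppose that for every x ∈ X one has ∫_Ω u(Φ(ω, x)) dν(ω) ≤ c·u(x) + d. Let L be a real number with L ≥ d/c. Then for every x ∈ X and every positive integer N, ν^{⊗N}({(ω_1,…,ω_N) ∈ Ω^N : u(x_j(ω_1,…,ω_j)) > L for all j = 1,…,N}) ≤ (2c)^{N−1}·(c·u(x) + d)/L, where x_0 = x and x_j = Φ(ω_j, x_{j−1}) for j = 1,…,N. -/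
/-!
Let `E N` be the event that the heights of the first `N` iterates all exceed `L`. Rather than the
probability of `E N`, one bounds the truncated moment `I N = ∫ 1_{E N} u(x_N)`. Dropping the
constraint on the last step and integrating out the last coordinate with the Margulis inequality
gives `I (N + 1) ≤ ∫ 1_{E N} (c u(x_N) + d)`. For `N ≥ 1` the event `E N` forces
`d ≤ c L ≤ c u(x_N)`, so `I (N + 1) ≤ 2 c I N`; for `N = 0` the bound is `c u(x) + d`. Hence
`I (N + 1) ≤ (2 c) ^ N (c u(x) + d)` (`lintegral_highSet_le`), and Markov's inequality on `E N`
yields the claim.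
-/

open MeasureTheory
open scoped ENNReal NNReal

/-- The `N`-step random iterate: `x₀ = x`, `x_{j} = Φ(ω_j, x_{j-1})`. -/
def randIter {Ω X : Type*} (Φ : Ω × X → X) : (N : ℕ) → (Fin N → Ω) → X → X
  | 0, _, x => x
  | N + 1, ω, x => Φ (ω (Fin.last N), randIter Φ N (fun i => ω i.castSucc) x)

/-- The event that the heights of the first `N` iterates all exceed `L`. -/
def highSet {Ω X : Type*} (Φ : Ω × X → X) (u : X → ℝ≥0) (L : ℝ≥0) (x : X) (N : ℕ) :
    Set (Fin N → Ω) :=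
  {ω : Fin N → Ω | ∀ j : Fin N,
    L < u (randIter Φ ((j : ℕ) + 1) (fun i => ω (Fin.castLE j.isLt i)) x)}

lemma mem_highSet_succ {Ω X : Type*} {Φ : Ω × X → X} {u : X → ℝ≥0} {L : ℝ≥0} {x : X} {N : ℕ}
    {ω : Fin (N + 1) → Ω} :
    ω ∈ highSet Φ u L x (N + 1) ↔
      (fun i : Fin N => ω i.castSucc) ∈ highSet Φ u L x N ∧ L < u (randIter Φ (N + 1) ω x) := by
  unfold highSet
  rw [Set.mem_ofPred_eq, Fin.forall_fin_succ']
  exact Iff.rfl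

lemma measurable_randIter {Ω X : Type*} [MeasurableSpace Ω] [MeasurableSpace X]
    {Φ : Ω × X → X} (hΦ : Measurable Φ) (x : X) (N : ℕ) :
    Measurable fun ω : Fin N → Ω => randIter Φ N ω x := by
  induction N with
  | zero => exact measurable_const
  | succ N ih =>
    refine hΦ.comp ((measurable_pi_apply _).prodMk (ih.comp ?_))
    exact measurable_pi_iff.2 fun i => measurable_pi_apply _

lemma measurableSet_highSet {Ω X : Type*} [MeasurableSpace Ω] [MeasurableSpace X]
    {Φ : Ω × X → X} (hΦ : Measurable Φ) {u : X → ℝ≥0} (hu : Measurable u) (L : ℝ≥0) (x : X)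
    (N : ℕ) : MeasurableSet (highSet Φ u L x N) := by
  unfold highSet
  rw [Set.ofPred_forall]
  refine MeasurableSet.iInter fun j => measurableSet_lt measurable_const ?_
  have h : Measurable fun (ω : Fin N → Ω) (i : Fin ((j : ℕ) + 1)) => ω (Fin.castLE j.isLt i) :=
    measurable_pi_iff.2 fun i => measurable_pi_apply _
  exact hu.comp ((measurable_randIter hΦ x ((j : ℕ) + 1)).comp h)

/-- Tonelli's theorem on `Ω^(N+1)`, integrating out the last coordinate first. -/
lemma lintegral_pi_last {Ω : Type*} [MeasurableSpace Ω] (ν : Measure Ω) [IsProbabilityMeasure ν]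
    (N : ℕ) (g : Ω × (Fin N → Ω) → ℝ≥0∞) (hg : Measurable g) :
    ∫⁻ ω, g (ω (Fin.last N), fun i => ω i.castSucc) ∂(Measure.pi fun _ : Fin (N + 1) => ν)
      = ∫⁻ ω, ∫⁻ a, g (a, ω) ∂ν ∂(Measure.pi fun _ : Fin N => ν) := by
  rw [← lintegral_prod_symm' g hg,
    ← (measurePreserving_piFinSuccAbove (fun _ : Fin (N + 1) => ν) (Fin.last N)).lintegral_comp hg]
  refine lintegral_congr fun ω => ?_
  congr 2
  funext i
  exact congrArg ω (Fin.succAbove_last_apply i).symm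

/-- One step of the recursion: integrating out the last coordinate by the Margulis inequality. -/
lemma lintegral_highSet_succ_le {Ω X : Type*} [MeasurableSpace Ω] [MeasurableSpace X]
    (ν : Measure Ω) [IsProbabilityMeasure ν] {Φ : Ω × X → X} (hΦ : Measurable Φ)
    {u : X → ℝ≥0} (hu : Measurable u) {c d : ℝ≥0}
    (hMargulis : ∀ x : X, ∫⁻ ω, (u (Φ (ω, x)) : ℝ≥0∞) ∂ν ≤ (c : ℝ≥0∞) * u x + d)
    (L : ℝ≥0) (x : X) (N : ℕ) :
    ∫⁻ ω in highSet Φ u L x (N + 1), (u (randIter Φ (N + 1) ω x) : ℝ≥0∞)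
        ∂(Measure.pi fun _ : Fin (N + 1) => ν)
      ≤ ∫⁻ ω in highSet Φ u L x N, ((c : ℝ≥0∞) * u (randIter Φ N ω x) + d)
        ∂(Measure.pi fun _ : Fin N => ν) := by
  have hE := measurableSet_highSet hΦ hu L x N
  let g : Ω × (Fin N → Ω) → ℝ≥0∞ :=
    (Prod.snd ⁻¹' highSet Φ u L x N).indicator fun p => (u (Φ (p.1, randIter Φ N p.2 x)) : ℝ≥0∞)
  have hg : Measurable g := by
    refine Measurable.indicator ?_ (measurable_snd hE)
    exact (hu.comp (hΦ.comp (measurable_fst.prodMk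
      ((measurable_randIter hΦ x N).comp measurable_snd)))).coe_nnreal_ennreal
  rw [← lintegral_indicator (measurableSet_highSet hΦ hu L x (N + 1)), ← lintegral_indicator hE]
  refine le_trans (lintegral_mono fun ω => ?_)
    ((lintegral_pi_last ν N g hg).le.trans (lintegral_mono fun ω => ?_))
  · by_cases h : ω ∈ highSet Φ u L x (N + 1)
    · have h' := (mem_highSet_succ.1 h).1
      rw [Set.indicator_of_mem h]
      simp only [g]
      rw [Set.indicator_of_mem (by exact h')]
      exact le_rfl
    · rw [Set.indicator_of_notMem h]
      exact zero_le
  · by_cases h : ω ∈ highSet Φ u L x N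
    · rw [Set.indicator_of_mem h]
      refine le_trans (lintegral_mono fun a => ?_) (hMargulis _)
      exact Set.indicator_le_self _ _ _
    · rw [Set.indicator_of_notMem h]
      simp [g, h]

/-- The truncated moment bound. -/
lemma lintegral_highSet_le {Ω X : Type*} [MeasurableSpace Ω] [MeasurableSpace X]
    (ν : Measure Ω) [IsProbabilityMeasure ν] {Φ : Ω × X → X} (hΦ : Measurable Φ)
    {u : X → ℝ≥0} (hu : Measurable u) {c d : ℝ≥0}
    (hMargulis : ∀ x : X, ∫⁻ ω, (u (Φ (ω, x)) : ℝ≥0∞) ∂ν ≤ (c : ℝ≥0∞) * u x + d)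
    {L : ℝ≥0} (hL : d ≤ c * L) (x : X) (N : ℕ) :
    ∫⁻ ω in highSet Φ u L x (N + 1), (u (randIter Φ (N + 1) ω x) : ℝ≥0∞)
        ∂(Measure.pi fun _ : Fin (N + 1) => ν)
      ≤ ((2 * c : ℝ≥0) : ℝ≥0∞) ^ N * ((c : ℝ≥0∞) * u x + d) := by
  induction N with
  | zero =>
    refine (lintegral_highSet_succ_le ν hΦ hu hMargulis L x 0).trans
      ((setLIntegral_le_lintegral _ _).trans ?_)
    simp [randIter]
  | succ N ih =>
    refine (lintegral_highSet_succ_le ν hΦ hu hMargulis L x (N + 1)).trans ?_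
    rw [pow_succ', mul_assoc]
    refine le_trans ?_ (mul_le_mul_right ih _)
    have hm : Measurable fun ω : Fin (N + 1) → Ω => (u (randIter Φ (N + 1) ω x) : ℝ≥0∞) :=
      (hu.comp (measurable_randIter hΦ x _)).coe_nnreal_ennreal
    rw [← lintegral_const_mul _ hm]
    refine setLIntegral_mono' (measurableSet_highSet hΦ hu L x (N + 1)) fun ω hω => ?_
    -- On the event, the additive constant is absorbed: `d ≤ c L ≤ c u(x_{N+1})`.
    have h : d ≤ c * u (randIter Φ (N + 1) ω x) :=
      hL.trans (mul_le_mul_right (mem_highSet_succ.1 hω).2.le _)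
    norm_cast
    rw [two_mul, add_mul]
    exact add_le_add_right h _

/-- If the one-step averaging operator satisfies a `(c,d)`-Margulis inequality with
respect to a height function `u : X → [0,∞)`, then for any level `L ≥ d/c` the
probability that the height of the first `N` iterates stays above `L` is at most
`(2c)^{N-1} (c·u(x)+d)/L`. -/
theorem measure_high_excursion_le {Ω X : Type*}
    [MeasurableSpace Ω] [MeasurableSpace X]
    (ν : Measure Ω) [IsProbabilityMeasure ν]
    (Φ : Ω × X → X) (hΦ : Measurable Φ)
    (u : X → ℝ≥0) (hu : Measurable u)
    (c d : ℝ≥0) (hc0 : 0 < c) (hc1 : c < 1) (hd : 0 < d)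
    (hMargulis : ∀ x : X, ∫⁻ ω, (u (Φ (ω, x)) : ℝ≥0∞) ∂ν ≤ (c : ℝ≥0∞) * u x + d)
    (L : ℝ≥0) (hL : d / c ≤ L) (x : X) (N : ℕ) (hN : 0 < N) :
    (Measure.pi fun _ : Fin N => ν)
        {ω : Fin N → Ω | ∀ j : Fin N,
          L < u (randIter Φ ((j : ℕ) + 1) (fun i => ω (Fin.castLE j.isLt i)) x)}
      ≤ ((2 * c : ℝ≥0) : ℝ≥0∞) ^ (N - 1) * ((c : ℝ≥0∞) * u x + d) / L := by
  obtain ⟨N, rfl⟩ : ∃ n, N = n + 1 := ⟨N - 1, by omega⟩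
  have hL0 : 0 < L := (div_pos hd hc0).trans_le hL
  have hdL : d ≤ c * L := (div_le_iff₀' hc0).1 hL
  rw [ENNReal.le_div_iff_mul_le (Or.inl (by exact_mod_cast hL0.ne')) (Or.inl ENNReal.coe_ne_top),
    Nat.add_sub_cancel, mul_comm]
  refine le_trans ?_ (lintegral_highSet_le ν hΦ hu hMargulis hdL x N)
  refine (setLIntegral_const (highSet Φ u L x (N + 1)) (L : ℝ≥0∞)).symm.le.trans ?_
  refine setLIntegral_mono' (measurableSet_highSet hΦ hu L x (N + 1)) fun ω hω => ?_
  exact_mod_cast (mem_highSet_succ.1 hω).2.le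
end

section
/- Let p be a positive integer, let λ_1,…,λ_p be positive real numbers, set λ_min := min_i λ_i and δ := λ_1 + ⋯ + λ_p, and let r > 0 and t ≥ 0. For γ ∈ ℤ^p let B_γ := ∏_{i=1}^p [e^{−λ_i t}·r·γ_i, e^{−λ_i t}·r·(γ_i + 1)). Then the number of γ ∈ ℤ^p such that B_γ ∩ [0,r)^p ≠ ∅ is at most e^{δ t}·(1 + p·2^{p−1}·e^{−λ_min t}). -/
/-!
If `B_γ` meets `[0,r)^p`, comparing coordinates gives `0 ≤ γ_i < e^{λ_i t}`, so `γ` lies in the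
integer box `∏_i [0, ⌈e^{λ_i t}⌉)`. This box has at most
`∏_i (e^{λ_i t} + 1) = e^{δ t} ∏_i (1 + e^{-λ_i t}) ≤ e^{δ t} (1 + a)^p` points, where
`a = e^{-λ_min t} ≤ 1`. Finally `(1 + a)^p ≤ 1 + p 2^{p-1} a` on `[0, 1]`, since the derivative
of `(1 + a)^p` is at most `p 2^{p-1}` there (`one_add_pow_le` proves this by induction).
-/

theorem one_add_pow_le (n : ℕ) {a : ℝ} (h0 : 0 ≤ a) (h1 : a ≤ 1) :
    (1 + a) ^ (n + 1) ≤ 1 + ((n + 1 : ℕ) : ℝ) * 2 ^ n * a := by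
  induction n with
  | zero => simp
  | succ n ih =>
    have h2 : (1 + a) ^ (n + 1) ≤ 2 ^ (n + 1) := pow_le_pow_left₀ (by linarith) (by linarith) _
    have h3 : a * (1 + a) ^ (n + 1) ≤ a * 2 ^ (n + 1) := mul_le_mul_of_nonneg_left h2 h0
    have h4 : 0 ≤ ((n : ℝ) + 1) * 2 ^ n * a := by positivity
    have h5 : (1 + a) ^ (n + 1 + 1) = (1 + a) ^ (n + 1) + a * (1 + a) ^ (n + 1) := by ring
    rw [h5]
    push_cast at ih ⊢
    rw [pow_succ (2 : ℝ) n] at h3 ⊢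
    nlinarith

/-- One coordinate of the counting: the contracted interval
`[e^{-s} r k, e^{-s} r (k + 1))` meets `[0, r)` only for `0 ≤ k < ⌈e^s⌉`. -/
theorem mem_Ico_of_interval_meets {s r x : ℝ} {k : ℤ} (hr : 0 < r)
    (h1 : Real.exp (-s) * r * (k : ℝ) ≤ x) (h2 : x < Real.exp (-s) * r * ((k : ℝ) + 1))
    (h3 : 0 ≤ x) (h4 : x < r) : k ∈ Finset.Ico (0 : ℤ) ⌈Real.exp s⌉ := by
  have he : 0 < Real.exp (-s) * r := by positivity
  rw [Finset.mem_Ico, Int.lt_ceil]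
  constructor
  · have h5 : (0 : ℝ) < (k : ℝ) + 1 := pos_of_mul_pos_right (h3.trans_lt h2) he.le
    have h6 : (0 : ℤ) < k + 1 := by exact_mod_cast h5
    omega
  · have h5 : Real.exp (-s) * r * (k : ℝ) < Real.exp (-s) * r * Real.exp s := by
      have h6 : Real.exp (-s) * r * Real.exp s = r := by
        rw [mul_right_comm, ← Real.exp_add]
        simp
      rw [h6]
      exact h1.trans_lt h4
    exact lt_of_mul_lt_mul_left h5 he.le


open scoped BigOperators

/-- Counting contracted Bowen boxes meeting a fixed cube: with `λ_i > 0`,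
`λ_min = min_i λ_i`, `δ = ∑ λ_i`, `r > 0` and `t ≥ 0`, the number of `γ ∈ ℤ^p` such that
`B_γ = ∏_i [e^{-λ_i t} r γ_i, e^{-λ_i t} r (γ_i + 1))` meets `[0,r)^p` is at most
`e^{δ t} (1 + p 2^{p-1} e^{-λ_min t})`. -/
theorem card_bowen_boxes_meeting_cube (p : ℕ) (hp : 0 < p)
    (lam : Fin p → ℝ) (hlam : ∀ i, 0 < lam i)
    (r t : ℝ) (hr : 0 < r) (ht : 0 ≤ t) :
    {γ : Fin p → ℤ | ∃ x : Fin p → ℝ,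
        (∀ i, Real.exp (-(lam i * t)) * r * (γ i : ℝ) ≤ x i ∧
          x i < Real.exp (-(lam i * t)) * r * ((γ i : ℝ) + 1)) ∧
        (∀ i, 0 ≤ x i ∧ x i < r)}.Finite ∧
    (Nat.card {γ : Fin p → ℤ | ∃ x : Fin p → ℝ,
        (∀ i, Real.exp (-(lam i * t)) * r * (γ i : ℝ) ≤ x i ∧
          x i < Real.exp (-(lam i * t)) * r * ((γ i : ℝ) + 1)) ∧
        (∀ i, 0 ≤ x i ∧ x i < r)} : ℝ)
      ≤ Real.exp ((∑ i, lam i) * t) *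
          (1 + (p : ℝ) * 2 ^ (p - 1) * Real.exp (-(⨅ i, lam i) * t)) := by
  have hsub : {γ : Fin p → ℤ | ∃ x : Fin p → ℝ,
        (∀ i, Real.exp (-(lam i * t)) * r * (γ i : ℝ) ≤ x i ∧
          x i < Real.exp (-(lam i * t)) * r * ((γ i : ℝ) + 1)) ∧
        (∀ i, 0 ≤ x i ∧ x i < r)} ⊆
      ↑(Fintype.piFinset fun i => Finset.Ico (0 : ℤ) ⌈Real.exp (lam i * t)⌉) := by
    rintro γ ⟨x, hB, hQ⟩
    rw [Finset.mem_coe, Fintype.mem_piFinset]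
    exact fun i => mem_Ico_of_interval_meets hr (hB i).1 (hB i).2 (hQ i).1 (hQ i).2
  refine ⟨(Finset.finite_toSet _).subset hsub, ?_⟩
  have hcard := Set.ncard_le_ncard hsub (Finset.finite_toSet _)
  rw [Set.ncard_coe_finset, Fintype.card_piFinset] at hcard
  rw [Nat.card_coe_set_eq]
  have : Nonempty (Fin p) := ⟨⟨0, hp⟩⟩
  have hmin : 0 ≤ ⨅ i, lam i := le_ciInf fun i => (hlam i).le
  set a := Real.exp (-(⨅ i, lam i) * t) with ha
  have ha1 : a ≤ 1 := Real.exp_le_one_iff.2 (by nlinarith)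
  have hfactor : ∀ i, ((Finset.Ico (0 : ℤ) ⌈Real.exp (lam i * t)⌉).card : ℝ) ≤
      Real.exp (lam i * t) * (1 + a) := by
    intro i
    have hle : Real.exp (-(lam i * t)) ≤ a := by
      rw [ha, neg_mul]
      gcongr
      exact ciInf_le (Set.finite_range lam).bddBelow i
    have hinv : Real.exp (lam i * t) * Real.exp (-(lam i * t)) = 1 := by
      rw [← Real.exp_add]
      simp
    have h1 : 1 ≤ Real.exp (lam i * t) * a :=
      hinv.symm.le.trans (mul_le_mul_of_nonneg_left hle (Real.exp_pos _).le)
    have hc : ((Finset.Ico (0 : ℤ) ⌈Real.exp (lam i * t)⌉).card : ℝ) =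
        (⌈Real.exp (lam i * t)⌉ : ℝ) := by
      have h0 : (0 : ℤ) ≤ ⌈Real.exp (lam i * t)⌉ := Int.ceil_nonneg (Real.exp_pos _).le
      rw [Int.card_Ico, sub_zero]
      exact_mod_cast Int.toNat_of_nonneg h0
    rw [hc]
    linarith [Int.ceil_lt_add_one (Real.exp (lam i * t))]
  calc _ ≤ ((∏ i, (Finset.Ico (0 : ℤ) ⌈Real.exp (lam i * t)⌉).card : ℕ) : ℝ) := by
        exact_mod_cast hcard
    _ ≤ ∏ i, Real.exp (lam i * t) * (1 + a) := by
        rw [Nat.cast_prod]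
        exact Finset.prod_le_prod (fun i _ => Nat.cast_nonneg _) fun i _ => hfactor i
    _ = Real.exp ((∑ i, lam i) * t) * (1 + a) ^ p := by
        rw [Finset.prod_mul_distrib, ← Real.exp_sum, ← Finset.sum_mul]
        simp
    _ ≤ _ := by
        have hpow := one_add_pow_le (p - 1) (Real.exp_pos _).le ha1
        rw [Nat.sub_add_cancel hp] at hpow
        exact mul_le_mul_of_nonneg_left hpow (Real.exp_pos _).le
end
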